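/- The Kreweras excursion numbers aₙ = f(n;0,0) satisfy the linear recurrence (n+6)(2n+9)·a_{n+3} − 54(n+2)(n+1)·aₙ = 0 for all n ∈ ℕ, with initial values a₀ = 1, a₁ = 0, a₂ = 0. -/

import Mathlib

/-!
The proof goes through the generating function `R(x;t) = ∑ f(n;i,0) xⁱ tⁿ` of walks ending on the
first axis and Tutte's method of invariants.

Removing the last step of a walk gives, for `Q(x,y;t) = ∑ f(n;i,j) xⁱ yʲ tⁿ` and with the symmetry
of the step set in the diagonal, the functional equation (`kernel_equation`)
`K(x,y) Q(x,y) = xy - t x R(x) - t y R(y)`, where `K = xy - t (x + y + x²y²)`.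
Put `P(x) = t²x²R(x)² - x R(x) + 2t R(x) + x`. On the curve `K = 0` the functional equation forces
`P(x) = P(y)`; precisely, `xy (P(x) - P(y))` is `K` times a power series. A series `p(x) - p(y)`
with this property vanishes (`eq_const_of_kernel_dvd`), so `P` does not depend on `x`, and setting
`x = 0` identifies it (`axisSeries_quadratic`):
`t²x²R(x)² - x R(x) + 2t R(x) + x = 2t R(0)`.

This equation has only one power series solution (`quadratic_unique`). With `u = 1 + 4t³u³` and
`c = 1 + xt²u²c²`, the series `u (c - 2t³u³c²)` solves it, hence `R(0) = u (1 - 2t³u³)`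
(`excursions_parametrization`). Differentiating this parametrization gives a second order linear
differential equation for `R(0)` (`excursions_ode`), whose coefficients are the recurrence.
-/


noncomputable section

/-- The set of admissible steps for Kreweras walks. -/
def krewerasSteps : Set (ℤ × ℤ) := {(-1, 0), (0, -1), (1, 1)}

/-- The position of the walk `w` after its first `k` steps. -/
def walkPos {n : ℕ} (w : Fin n → ℤ × ℤ) (k : ℕ) : ℤ × ℤ :=
  ∑ m ∈ Finset.univ.filter (fun m : Fin n => (m : ℕ) < k), w m

/-- `w` is a Kreweras walk: every step is admissible and the walk (which starts
at the origin) never leaves the first quadrant. -/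
def IsKrewerasWalk {n : ℕ} (w : Fin n → ℤ × ℤ) : Prop :=
  (∀ m, w m ∈ krewerasSteps) ∧ ∀ k ≤ n, 0 ≤ (walkPos w k).1 ∧ 0 ≤ (walkPos w k).2

/-- The number of Kreweras walks of length `n` ending at `(i, j)`. -/
def f (n : ℕ) (i j : ℤ) : ℕ :=
  Nat.card {w : Fin n → ℤ × ℤ // IsKrewerasWalk w ∧ walkPos w n = (i, j)}

/-! ### Fixed points of power series -/

open PowerSeries in
/-- The map `a ↦ 1 + X * g a` is a contraction for the `X`-adic topology; its fixed point is the
limit of the iterates starting at `0`. The divisibility hypothesis holds for every polynomial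
map `g`. -/
theorem exists_fixed_point {A : Type*} [CommRing A] (g : A⟦X⟧ → A⟦X⟧)
    (hg : ∀ a b, a - b ∣ g a - g b) : ∃ u : A⟦X⟧, u = 1 + X * g u := by
  set F : A⟦X⟧ → A⟦X⟧ := fun a => 1 + X * g a with hF
  have step : ∀ n a b, (X : A⟦X⟧) ^ n ∣ a - b → (X : A⟦X⟧) ^ (n + 1) ∣ F a - F b := by
    intro n a b h
    have : F a - F b = X * (g a - g b) := by simp only [hF]; ring
    rw [this, pow_succ']
    exact mul_dvd_mul_left _ (h.trans (hg a b))
  have it : ∀ n, (X : A⟦X⟧) ^ n ∣ F^[n + 1] 0 - F^[n] 0 := by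
    intro n
    induction n with
    | zero => simp
    | succ n ih =>
      rw [Function.iterate_succ_apply' F (n + 1), Function.iterate_succ_apply' F n]
      exact step _ _ _ (by rwa [Function.iterate_succ_apply' F n] at ih)
  have it2 : ∀ n k, (X : A⟦X⟧) ^ n ∣ F^[n + k] 0 - F^[n] 0 := by
    intro n k
    induction k with
    | zero => simp
    | succ k ih =>
      have h1 := (pow_dvd_pow (X : A⟦X⟧) (Nat.le_add_right n k)).trans (it (n + k))
      have := dvd_add h1 ih
      rwa [sub_add_sub_cancel] at this
  refine ⟨mk fun n => coeff n (F^[n + 1] 0), ?_⟩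
  set u : A⟦X⟧ := mk fun n => coeff n (F^[n + 1] 0) with hu
  have hun : ∀ n, (X : A⟦X⟧) ^ n ∣ u - F^[n] 0 := by
    intro n
    rw [X_pow_dvd_iff]
    intro m hm
    obtain ⟨k, rfl⟩ := Nat.exists_eq_add_of_le hm
    have h := (X_pow_dvd_iff.1 (it2 (m + 1) k)) m (Nat.lt_succ_self m)
    rw [map_sub, sub_eq_zero] at h ⊢
    rw [hu, coeff_mk, Nat.succ_eq_add_one, h]
  ext n
  have h1 := (X_pow_dvd_iff.1 (hun (n + 1))) n (Nat.lt_succ_self n)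
  have h2 := (X_pow_dvd_iff.1 (step n _ _ (hun n))) n (Nat.lt_succ_self n)
  rw [← Function.iterate_succ_apply' F n] at h2
  rw [map_sub, sub_eq_zero] at h1 h2
  rw [h1, ← h2]

/-! ### The step recurrence for the walk counts -/

theorem walkPos_snoc_of_le {n : ℕ} (w : Fin n → ℤ × ℤ) (s : ℤ × ℤ) {k : ℕ} (hk : k ≤ n) :
    walkPos (Fin.snoc w s : Fin (n + 1) → ℤ × ℤ) k = walkPos w k := by
  simp only [walkPos, Finset.sum_filter, Fin.sum_univ_castSucc, Fin.snoc_castSucc, Fin.snoc_last,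
    Fin.val_castSucc, Fin.val_last]
  rw [if_neg (by omega), add_zero]

theorem walkPos_snoc_last {n : ℕ} (w : Fin n → ℤ × ℤ) (s : ℤ × ℤ) :
    walkPos (Fin.snoc w s : Fin (n + 1) → ℤ × ℤ) (n + 1) = walkPos w n + s := by
  simp only [walkPos, Finset.sum_filter, Fin.sum_univ_castSucc, Fin.snoc_castSucc, Fin.snoc_last,
    Fin.val_castSucc, Fin.val_last]
  simp [show ∀ m : Fin n, (m : ℕ) < n + 1 from fun m => by omega]

theorem isKrewerasWalk_snoc {n : ℕ} (w : Fin n → ℤ × ℤ) (s : ℤ × ℤ) :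
    IsKrewerasWalk (Fin.snoc w s : Fin (n + 1) → ℤ × ℤ) ↔
      IsKrewerasWalk w ∧ s ∈ krewerasSteps ∧
        0 ≤ (walkPos w n + s).1 ∧ 0 ≤ (walkPos w n + s).2 := by
  unfold IsKrewerasWalk
  rw [Fin.forall_fin_succ']
  simp only [Fin.snoc_castSucc, Fin.snoc_last]
  constructor
  · rintro ⟨⟨h1, h2⟩, h3⟩
    refine ⟨⟨h1, fun k hk => ?_⟩, h2, ?_⟩
    · rw [← walkPos_snoc_of_le w s hk]; exact h3 k (by omega)
    · rw [← walkPos_snoc_last]; exact h3 (n + 1) le_rfl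
  · rintro ⟨⟨h1, h3⟩, h2, h4⟩
    refine ⟨⟨h1, h2⟩, fun k hk => ?_⟩
    rcases Nat.lt_or_ge n k with h | h
    · obtain rfl : k = n + 1 := by omega
      rw [walkPos_snoc_last]; exact h4
    · rw [walkPos_snoc_of_le w s h]; exact h3 k h

/-- The set of Kreweras walks of length `n` ending at `p`. -/
def walkSet (n : ℕ) (p : ℤ × ℤ) : Set (Fin n → ℤ × ℤ) :=
  {w | IsKrewerasWalk w ∧ walkPos w n = p}

theorem f_eq_ncard (n : ℕ) (i j : ℤ) : f n i j = (walkSet n (i, j)).ncard := rfl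

theorem walkSet_finite (n : ℕ) (p : ℤ × ℤ) : (walkSet n p).Finite := by
  refine (Set.Finite.pi' (t := fun _ : Fin n => krewerasSteps) fun _ => ?_).subset
    fun w hw => hw.1.1
  unfold krewerasSteps
  exact Set.toFinite _

theorem f_of_neg (n : ℕ) (i j : ℤ) (h : i < 0 ∨ j < 0) : f n i j = 0 := by
  rw [f_eq_ncard, Set.ncard_eq_zero (walkSet_finite _ _), Set.eq_empty_iff_forall_notMem]
  rintro w ⟨h1, h2⟩
  have := h1.2 n le_rfl
  rw [h2] at this
  simp only at this
  omega

theorem f_zero (i j : ℤ) : f 0 i j = if i = 0 ∧ j = 0 then 1 else 0 := by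
  rw [f_eq_ncard]
  split_ifs with h
  · obtain ⟨rfl, rfl⟩ := h
    rw [Set.ncard_eq_one]
    refine ⟨Fin.elim0, Set.eq_singleton_iff_unique_mem.2
      ⟨⟨⟨fun m => m.elim0, ?_⟩, ?_⟩, fun w _ => Subsingleton.elim _ _⟩⟩
    · intro k _; simp [walkPos]
    · simp [walkPos]; rfl
  · rw [Set.ncard_eq_zero (walkSet_finite _ _), Set.eq_empty_iff_forall_notMem]
    rintro w ⟨_, h2⟩
    simp only [walkPos, Finset.univ_eq_empty, Finset.filter_empty, Finset.sum_empty,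
      Prod.ext_iff, Prod.fst_zero, Prod.snd_zero] at h2
    exact h ⟨h2.1.symm, h2.2.symm⟩

/-- Walks of length `n + 1` are sorted by their last step. When `i = 0` or `j = 0` the last summand
vanishes by `f_of_neg`. -/
theorem f_succ (n : ℕ) (i j : ℤ) (hi : 0 ≤ i) (hj : 0 ≤ j) :
    f (n + 1) i j = f n (i + 1) j + f n i (j + 1) + f n (i - 1) (j - 1) := by
  simp only [f_eq_ncard]
  let e : ℤ × ℤ → (Fin n → ℤ × ℤ) → (Fin (n + 1) → ℤ × ℤ) := fun s w => Fin.snoc w s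
  have einj : ∀ s, Function.Injective (e s) := fun s w w' h => (Fin.snoc_injective2 h).1
  have edisj : ∀ s s' S S', s ≠ s' → Disjoint (e s '' S) (e s' '' S') := by
    intro s s' S S' hs
    rw [Set.disjoint_left]
    rintro _ ⟨w, _, rfl⟩ ⟨w', _, h⟩
    exact hs (Fin.snoc_injective2 h).2.symm
  have key : walkSet (n + 1) (i, j) =
      (e (-1, 0) '' walkSet n (i + 1, j) ∪ e (0, -1) '' walkSet n (i, j + 1)) ∪
        e (1, 1) '' walkSet n (i - 1, j - 1) := by
    ext w
    constructor
    · rintro ⟨h1, h2⟩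
      obtain ⟨v, s, rfl⟩ : ∃ v s, w = Fin.snoc v s :=
        ⟨Fin.init w, w (Fin.last n), (Fin.snoc_init_self w).symm⟩
      rw [isKrewerasWalk_snoc] at h1
      rw [walkPos_snoc_last] at h2
      obtain ⟨h3, h4, -⟩ := h1
      have h5 : walkPos v n = (i, j) - s := eq_sub_of_add_eq h2
      rcases h4 with rfl | rfl | rfl
      · exact Or.inl (Or.inl ⟨v, ⟨h3, by simpa using h5⟩, rfl⟩)
      · exact Or.inl (Or.inr ⟨v, ⟨h3, by simpa using h5⟩, rfl⟩)
      · exact Or.inr ⟨v, ⟨h3, by simpa using h5⟩, rfl⟩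
    · rintro ((⟨v, ⟨h1, h2⟩, rfl⟩ | ⟨v, ⟨h1, h2⟩, rfl⟩) | ⟨v, ⟨h1, h2⟩, rfl⟩) <;>
        refine ⟨(isKrewerasWalk_snoc _ _).2 ⟨h1, by simp [krewerasSteps], ?_⟩,
          (walkPos_snoc_last _ _).trans ?_⟩ <;> rw [h2] <;> simp [hi, hj]
  have fin : ∀ s p, (e s '' walkSet n p).Finite := fun s p => (walkSet_finite n p).image _
  rw [key, Set.ncard_union_eq _ ((fin _ _).union (fin _ _)) (fin _ _),
    Set.ncard_union_eq (edisj _ _ _ _ (by decide)) (fin _ _) (fin _ _)]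
  · simp only [Set.ncard_image_of_injective _ (einj _)]
  · exact Set.disjoint_union_left.2 ⟨edisj _ _ _ _ (by decide), edisj _ _ _ _ (by decide)⟩

/-- The step set is invariant under reflection in the diagonal. -/
theorem f_symm (n : ℕ) : ∀ i j : ℤ, f n i j = f n j i := by
  induction n with
  | zero => intro i j; simp only [f_zero, and_comm]
  | succ n ih =>
    intro i j
    by_cases h : 0 ≤ i ∧ 0 ≤ j
    · rw [f_succ n i j h.1 h.2, f_succ n j i h.2 h.1, ih (i + 1) j, ih i (j + 1),
        ih (i - 1) (j - 1)]
      ring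
    · rw [f_of_neg _ i j (by omega), f_of_neg _ j i (by omega)]

/-! ### The quadratic equation for walks ending on the axis -/

open PowerSeries

/-- The polynomial `∑ f(n;i,j) xⁱ yʲ` of walks of length `n`, as an element of `ℚ⟦x⟧⟦y⟧`:
the inner variable is `x`, the outer one `y`. -/
def walkCoeff (n : ℕ) : ℚ⟦X⟧⟦X⟧ :=
  PowerSeries.mk fun j => PowerSeries.mk fun i => (f n i j : ℚ)

/-- The polynomial `∑ f(n;i,0) xⁱ` of walks of length `n` ending on the first axis. -/
def axisCoeff (n : ℕ) : ℚ⟦X⟧ := PowerSeries.mk fun i => (f n i 0 : ℚ)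

/-- The generating function `R(x;t) = ∑ f(n;i,0) xⁱ tⁿ`, in `ℚ⟦x⟧⟦t⟧`. -/
def axisSeries : ℚ⟦X⟧⟦X⟧ := PowerSeries.mk axisCoeff

theorem walkCoeff_zero : walkCoeff 0 = 1 := by
  ext j i
  rw [walkCoeff, coeff_mk, coeff_mk, f_zero, coeff_one]
  by_cases hj : j = 0
  · simp [hj, coeff_one]
  · simp [hj]

/-- The coefficient of `t ^ (n + 1)` in the functional equation: `f_succ` multiplied by `xy`. The
two terms involving `axisCoeff n` compensate for the steps that would leave the quadrant; the one in
the variable `y` counts walks ending on the second axis, by symmetry. -/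
theorem walkCoeff_succ (n : ℕ) :
    C X * X * walkCoeff (n + 1) + X * PowerSeries.map C (axisCoeff n) + C X * C (axisCoeff n) =
      (C X + X + (C X) ^ 2 * X ^ 2) * walkCoeff n := by
  have hl : (C X + X + (C X) ^ 2 * X ^ 2) * walkCoeff n =
      C X * walkCoeff n + X * walkCoeff n + X * (X * (C X * (C X * walkCoeff n))) := by ring
  rw [hl, mul_assoc, mul_left_comm]
  ext j i
  rcases j with _ | j
  · rcases i with _ | i <;> simp [walkCoeff, axisCoeff]
  rcases i with _ | i
  · rcases j with _ | j <;>
      simp [walkCoeff, axisCoeff, coeff_succ_X_mul, coeff_C_mul, -map_natCast, f_symm n 0]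
  have hs := f_succ n i j (by omega) (by omega)
  rcases j with _ | j
  · rw [f_of_neg n (i - 1) _ (by simp)] at hs
    simp [walkCoeff, axisCoeff, coeff_succ_X_mul, coeff_C_mul, -map_natCast] at hs ⊢
    rw [hs]; push_cast; ring
  rcases i with _ | i
  · rw [f_of_neg n (((0 : ℕ) : ℤ) - 1) _ (by simp)] at hs
    simp [walkCoeff, axisCoeff, coeff_succ_X_mul, coeff_C_mul, -map_natCast] at hs ⊢
    rw [hs]; push_cast; ring
  · simp [walkCoeff, axisCoeff, coeff_succ_X_mul, coeff_C_mul, -map_natCast] at hs ⊢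
    rw [hs]; push_cast; ring

/-- The functional equation `xy Q + t y R(y) + t x R(x) = xy + t (x + y + x²y²) Q` in `ℚ⟦x⟧⟦y⟧⟦t⟧`,
where `x` is `C (C X)`, `y` is `C X` and `t` is `X`. The ring homomorphisms `map C` and
`map (map C)` send a series `p(x;t)` to `p(x;t)` and to `p(y;t)` respectively. -/
theorem kernel_equation :
    C (C X * X) * mk walkCoeff + X * C X * PowerSeries.map (PowerSeries.map C) axisSeries
        + X * C (C X) * PowerSeries.map C axisSeries =
      C (C X * X) + X * C (C X + X + (C X) ^ 2 * X ^ 2) * mk walkCoeff := by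
  simp only [mul_assoc X]
  ext1 n
  rcases n with _ | n
  · simp [walkCoeff_zero]
  · have := walkCoeff_succ n
    rw [map_add, map_add, map_add, coeff_succ_X_mul, coeff_succ_X_mul, coeff_succ_X_mul,
      coeff_C_mul, coeff_C_mul, coeff_C_mul, coeff_C_mul, coeff_mk, coeff_mk, coeff_map, coeff_map,
      axisSeries, coeff_mk, coeff_C, if_neg (Nat.succ_ne_zero n), zero_add, this]

/-- If `xy (p(x) - p(y)) = K B`, then `p` does not depend on `x`. Setting `y = 0` in the coefficient
of `t ^ (n + 1)` shows that every coefficient of `B` vanishes at `y = 0`. Inductively the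
coefficients of `B` are zero: if `Bₙ₋₁ = 0` then `pₙ(x) - pₙ(y) = Bₙ`, and `y = 0` gives
`pₙ(x) = pₙ(0)`, so `Bₙ = 0`. -/
theorem eq_const_of_kernel_dvd (p : ℚ⟦X⟧⟦X⟧) (B : ℚ⟦X⟧⟦X⟧⟦X⟧)
    (h : C (C X * X) * (PowerSeries.map C p - PowerSeries.map (PowerSeries.map C) p) =
      (C (C X * X) - X * C (C X + X + (C X) ^ 2 * X ^ 2)) * B) :
    p = PowerSeries.map C (PowerSeries.map constantCoeff p) := by
  have h0 : C X * X * (C (coeff 0 p) - PowerSeries.map C (coeff 0 p)) = C X * X * coeff 0 B := by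
    have := congrArg (coeff 0) h
    rwa [sub_mul, mul_assoc X, map_sub, coeff_zero_X_mul, sub_zero, coeff_C_mul, coeff_C_mul,
      map_sub, coeff_map, coeff_map] at this
  have hS : ∀ n, C X * X * (C (coeff (n + 1) p) - PowerSeries.map C (coeff (n + 1) p)) =
      C X * X * coeff (n + 1) B - (C X + X + (C X) ^ 2 * X ^ 2) * coeff n B := by
    intro n
    have := congrArg (coeff (n + 1)) h
    rw [sub_mul, mul_assoc X] at this
    rwa [map_sub, coeff_succ_X_mul, coeff_C_mul, coeff_C_mul, coeff_C_mul, map_sub, coeff_map,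
      coeff_map] at this
  have hB : ∀ n, constantCoeff (coeff n B) = 0 := by
    intro n
    have := congrArg constantCoeff (hS n)
    simpa using this
  have hne : (C X * X : ℚ⟦X⟧⟦X⟧) ≠ 0 := by
    refine mul_ne_zero ?_ X_ne_zero
    rw [Ne, map_eq_zero_iff _ C_injective]
    exact X_ne_zero
  -- At `y = 0` the equation `pₙ(x) - pₙ(y) = Bₙ` reads `pₙ(x) = pₙ(0)`.
  have hp : ∀ n, C (coeff n p) - PowerSeries.map C (coeff n p) = coeff n B →
      coeff n p = C (constantCoeff (coeff n p)) := by
    intro n hn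
    have := congrArg constantCoeff hn
    rw [hB] at this
    rw [map_sub, constantCoeff_C, sub_eq_zero] at this
    rw [this, ← coeff_zero_eq_constantCoeff_apply, ← coeff_zero_eq_constantCoeff_apply, coeff_map,
      coeff_zero_C]
  have hp' : ∀ n, C (coeff n p) - PowerSeries.map C (coeff n p) = coeff n B ∧ coeff n B = 0 := by
    intro n
    have aux : C (coeff n p) - PowerSeries.map C (coeff n p) = coeff n B → coeff n B = 0 := by
      intro hn
      rw [← hn, hp n hn]
      simp
    induction n with
    | zero => exact ⟨mul_left_cancel₀ hne h0, aux (mul_left_cancel₀ hne h0)⟩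
    | succ n ih =>
      have := hS n
      have hB0 : coeff n B = 0 := by
        apply (ih ?_).2
        intro hn
        rw [← hn, hp n hn]
        simp
      rw [hB0, mul_zero, sub_zero] at this
      exact ⟨mul_left_cancel₀ hne this, aux (mul_left_cancel₀ hne this)⟩
  ext1 n
  rw [coeff_map, coeff_map]
  exact hp n (hp' n).1

/-- The equation `t²x²R(x)² - x R(x) + 2t R(x) + x = 2t R(0)`; here `map constantCoeff` sets
`x = 0`. -/
theorem axisSeries_quadratic :
    X ^ 2 * (C X) ^ 2 * axisSeries ^ 2 - C X * axisSeries + 2 * X * axisSeries + C X =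
      2 * X * PowerSeries.map C (PowerSeries.map constantCoeff axisSeries) := by
  have hk := kernel_equation
  -- The cofactor is `B = -(x R(x) - y R(y)) - t xy (x R(x) - y R(y)) Q - (y - x) Q`.
  rw [eq_const_of_kernel_dvd
    (X ^ 2 * (C X) ^ 2 * axisSeries ^ 2 - C X * axisSeries + 2 * X * axisSeries + C X)
    (-(C (C X) * PowerSeries.map C axisSeries - C X * PowerSeries.map (PowerSeries.map C) axisSeries)
      - X * C (C X) * C X * (C (C X) * PowerSeries.map C axisSeries
        - C X * PowerSeries.map (PowerSeries.map C) axisSeries) * mk walkCoeff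
      - mk walkCoeff * (C X - C (C X)))]
  · have h2 : PowerSeries.map C (PowerSeries.map constantCoeff (2 : ℚ⟦X⟧⟦X⟧)) = 2 := by
      rw [map_ofNat, map_ofNat]
    simp [h2]
  · simp only [map_add, map_sub, map_mul, map_pow, map_X, map_C, map_ofNat] at hk ⊢
    linear_combination (C X - C (C X) + C (C X) * C X * (X * C (C X) * PowerSeries.map C axisSeries -
      X * C X * PowerSeries.map (PowerSeries.map C) axisSeries)) * hk

/-! ### Solving the quadratic equation -/

/-- The difference of two solutions is divisible by every power of `t`: in the equation each
occurrence of the unknown other than `x R` carries a factor `t`. -/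
theorem quadratic_unique (R S : ℚ⟦X⟧⟦X⟧)
    (hR : X ^ 2 * (C X) ^ 2 * R ^ 2 - C X * R + 2 * X * R + C X =
      2 * X * PowerSeries.map C (PowerSeries.map constantCoeff R))
    (hS : X ^ 2 * (C X) ^ 2 * S ^ 2 - C X * S + 2 * X * S + C X =
      2 * X * PowerSeries.map C (PowerSeries.map constantCoeff S)) : R = S := by
  have key : C X * (R - S) = X * (X * (C X) ^ 2 * (R + S) * (R - S) + 2 * (R - S) -
      2 * PowerSeries.map C (PowerSeries.map constantCoeff (R - S))) := by
    rw [map_sub, map_sub]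
    linear_combination hS - hR
  have hd : ∀ n, (X : ℚ⟦X⟧⟦X⟧) ^ n ∣ R - S := by
    intro n
    induction n with
    | zero => simp
    | succ n ih =>
      have h1 : (X : ℚ⟦X⟧⟦X⟧) ^ n ∣
          PowerSeries.map C (PowerSeries.map constantCoeff (R - S)) := by
        obtain ⟨q, hq⟩ := ih
        rw [hq]
        simp
      have h2 : (X : ℚ⟦X⟧⟦X⟧) ^ (n + 1) ∣ C X * (R - S) := by
        rw [key, pow_succ']
        exact mul_dvd_mul_left _ (dvd_sub (dvd_add (ih.mul_left _) (ih.mul_left _))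
          (h1.mul_left _))
      rw [X_pow_dvd_iff] at h2 ⊢
      intro m hm
      have := h2 m hm
      rw [coeff_C_mul] at this
      exact (mul_eq_zero.1 this).resolve_left X_ne_zero
  rw [← sub_eq_zero]
  ext1 n
  exact (X_pow_dvd_iff.1 (hd (n + 1))) n (Nat.lt_succ_self n)

/-- The series `R(0) = ∑ f(n;0,0) tⁿ` is rational in the cubic series `u = 1 + 4t³u³`. -/
theorem excursions_parametrization : ∃ u : ℚ⟦X⟧, u = 1 + 4 * X ^ 3 * u ^ 3 ∧
    PowerSeries.map constantCoeff axisSeries = u * (1 - 2 * X ^ 3 * u ^ 3) := by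
  obtain ⟨u, hu⟩ := exists_fixed_point (fun u : ℚ⟦X⟧ => 4 * X ^ 2 * u ^ 3) (fun a b => by
    rw [← mul_sub]; exact (sub_dvd_pow_sub_pow a b 3).mul_left _)
  have hu' : u = 1 + 4 * X ^ 3 * u ^ 3 := by linear_combination hu
  set v : ℚ⟦X⟧⟦X⟧ := PowerSeries.map C u with hv
  have hv' : v = 1 + 4 * X ^ 3 * v ^ 3 := by
    have := congrArg (PowerSeries.map (C (R := ℚ))) hu'
    simpa only [map_add, map_mul, map_pow, map_one, map_X, map_ofNat] using this
  obtain ⟨c, hc⟩ := exists_fixed_point (fun c : ℚ⟦X⟧⟦X⟧ => C X * X * v ^ 2 * c ^ 2) (fun a b => by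
    rw [← mul_sub]; exact (sub_dvd_pow_sub_pow a b 2).mul_left _)
  have hcu : PowerSeries.map constantCoeff v = u := by
    ext n; simp [hv]
  have hc0 : PowerSeries.map constantCoeff c = 1 := by
    have := congrArg (PowerSeries.map (constantCoeff (R := ℚ))) hc
    simpa using this
  have hS0 : PowerSeries.map constantCoeff (v * (c - 2 * X ^ 3 * v ^ 3 * c ^ 2)) =
      u * (1 - 2 * X ^ 3 * u ^ 3) := by
    simp only [map_mul, map_sub, map_pow, map_X, map_ofNat, hcu, hc0, one_pow, mul_one]
  refine ⟨u, hu', ?_⟩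
  rw [quadratic_unique axisSeries (v * (c - 2 * X ^ 3 * v ^ 3 * c ^ 2)) axisSeries_quadratic ?_,
    hS0]
  rw [hS0]
  simp only [map_mul, map_sub, map_one, map_ofNat, map_pow, map_X]
  rw [← hv]
  clear_value v
  linear_combination (-C X * (1 - 2 * X ^ 3 * v ^ 3 * c) ^ 2 +
    2 * X * v * (1 - 2 * X ^ 3 * v ^ 3 * (c + 1))) * hc +
    C X * (-c + 2 * X ^ 3 * v ^ 3 * c ^ 2) * hv'

/-! ### The recurrence -/

/-- With `θ = t d/dt`, the equation `(2θ² + 9θ + 9) r - 54 t³ (θ² + 3θ + 2) r = 9`, that is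
`(θ + 3)(2θ + 3) r - 54 t³ (θ + 2)(θ + 1) r = 9`; here `s = θ r` and `q = θ² r`. It follows from
`(3 - 2u) θu = 3u(u - 1)`, `2r = 3u - u²` and `2θr = 3u² - 3u`. -/
theorem excursions_ode (r : ℚ⟦X⟧) (u : ℚ⟦X⟧) (hu : u = 1 + 4 * X ^ 3 * u ^ 3)
    (hr : r = u * (1 - 2 * X ^ 3 * u ^ 3)) (s q : ℚ⟦X⟧) (hs : s = X * derivative ℚ r)
    (hq : q = X * derivative ℚ s) :
    2 * q + 9 * s + 9 * r - 54 * (X ^ 3 * (q + 3 * s + 2 * r)) = 9 := by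
  have hD : ∀ n : ℕ, ∀ g : ℚ⟦X⟧, derivative ℚ (g ^ (n + 1)) =
      (n + 1) * g ^ n * derivative ℚ g := by
    intro n g
    rw [Derivation.leibniz_pow]
    simp [mul_assoc]
  have h1 : 2 * r = 3 * u - u ^ 2 := by linear_combination 2 * hr + u * hu
  have hdu : derivative ℚ u = 12 * X ^ 2 * u ^ 3 + 12 * X ^ 3 * u ^ 2 * derivative ℚ u := by
    have h4 : u = 1 + (4 : ℚ) • (X ^ 3 * u ^ 3) := by
      rw [smul_eq_C_mul, map_ofNat]; linear_combination hu
    have := congrArg (derivative ℚ) h4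
    rw [map_add, Derivation.map_one_eq_zero, Derivation.map_smul, Derivation.leibniz, hD 2, hD 2,
      smul_eq_C_mul, map_ofNat, derivative_X, smul_eq_mul, smul_eq_mul] at this
    push_cast at this
    linear_combination this
  have e1 : X * derivative ℚ u * (3 - 2 * u) = 3 * u * (u - 1) := by
    linear_combination X * u * hdu - 3 * (u + X * derivative ℚ u) * hu
  have h2 : 2 * s = 3 * u ^ 2 - 3 * u := by
    have h4 : (2 : ℚ) • r = (3 : ℚ) • u - u ^ 2 := by
      rw [smul_eq_C_mul, smul_eq_C_mul, map_ofNat, map_ofNat, h1]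
    have := congrArg (derivative ℚ) h4
    rw [map_sub, Derivation.map_smul, Derivation.map_smul, hD 1, smul_eq_C_mul, smul_eq_C_mul,
      map_ofNat, map_ofNat] at this
    push_cast at this
    linear_combination 2 * hs + X * this + e1
  have h3 : 2 * q = 3 * (2 * u - 1) * (X * derivative ℚ u) := by
    have h4 : (2 : ℚ) • s = (3 : ℚ) • u ^ 2 - (3 : ℚ) • u := by
      rw [smul_eq_C_mul, smul_eq_C_mul, smul_eq_C_mul, map_ofNat, map_ofNat, h2]
    have := congrArg (derivative ℚ) h4
    rw [map_sub, Derivation.map_smul, Derivation.map_smul, Derivation.map_smul, hD 1,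
      smul_eq_C_mul, smul_eq_C_mul, smul_eq_C_mul, map_ofNat, map_ofNat] at this
    push_cast at this
    linear_combination 2 * hq + X * this
  have hu0 : constantCoeff u = 1 := by
    have := congrArg (constantCoeff (R := ℚ)) hu
    simpa using this
  -- The constant coefficient of `3 - 2u` is `1`, so this factor can be cancelled.
  have hne : 2 * (3 - 2 * u) ≠ 0 := by
    intro h
    have := congrArg (constantCoeff (R := ℚ)) h
    rw [map_mul, map_sub, map_mul, map_ofNat, map_ofNat, hu0] at this
    norm_num at this
  apply mul_left_cancel₀ hne
  linear_combination (3 - 2 * u) * ((2 - 54 * X ^ 3) * h3 + (9 - 162 * X ^ 3) * h2 +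
    (9 - 108 * X ^ 3) * h1) + 3 * (2 * u - 1) * (2 - 54 * X ^ 3) * e1 + 54 * hu

theorem coeff_X_mul_derivative (g : ℚ⟦X⟧) (n : ℕ) :
    coeff n (X * derivative ℚ g) = n * coeff n g := by
  rcases n with _ | n
  · simp
  · rw [coeff_succ_X_mul, coeff_derivative]; push_cast; ring

/-- The Kreweras excursion numbers `aₙ = f(n;0,0)` satisfy
`(n+6)(2n+9)·a_{n+3} = 54(n+2)(n+1)·aₙ`, with `a₀ = 1`, `a₁ = 0`, `a₂ = 0`. -/
theorem kreweras_excursions_recurrence :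
    f 0 0 0 = 1 ∧ f 1 0 0 = 0 ∧ f 2 0 0 = 0 ∧
    ∀ n : ℕ, (n + 6) * (2 * n + 9) * f (n + 3) 0 0
      = 54 * (n + 2) * (n + 1) * f n 0 0 := by
  refine ⟨by simp [f_zero], ?_, ?_, fun n => ?_⟩
  · simp [f_succ 0, f_zero]
  · rw [f_succ 1 0 0 le_rfl le_rfl, f_of_neg 1 (0 - 1) _ (by simp)]
    simp [f_succ 0, f_zero]
  obtain ⟨u, hu, hr⟩ := excursions_parametrization
  have h := congrArg (coeff (n + 3)) (excursions_ode _ u hu hr _ _ rfl rfl)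
  have hr' : ∀ m, coeff m (PowerSeries.map constantCoeff axisSeries) = (f m 0 0 : ℚ) := by
    intro m
    simp [axisSeries, axisCoeff, ← coeff_zero_eq_constantCoeff_apply, -coeff_zero_eq_constantCoeff]
  have hC : ∀ k : ℕ, ∀ g : ℚ⟦X⟧, ∀ m, coeff m ((k : ℚ⟦X⟧) * g) = k * coeff m g := by
    intro k g m
    rw [← map_natCast (C (R := ℚ)) k, coeff_C_mul]
  have h9 : coeff (n + 3) (9 : ℚ⟦X⟧) = 0 := by
    rw [← map_ofNat (C (R := ℚ)) 9, coeff_C, if_neg (by omega)]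
  have c2 := hC 2
  have c3 := hC 3
  have c9 := hC 9
  have c54 := hC 54
  push_cast at c2 c3 c9 c54
  rw [h9, map_sub, map_add, map_add, c2, c9, c9, c54, coeff_X_pow_mul, map_add, map_add, c3, c2]
    at h
  simp only [coeff_X_mul_derivative, hr'] at h
  push_cast at h
  have : ((n : ℚ) + 6) * (2 * n + 9) * f (n + 3) 0 0 = 54 * (n + 2) * (n + 1) * f n 0 0 := by
    linear_combination h
  exact_mod_cast this
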